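/- arXiv:1303.0821 — 2 statements merged into one kernel-verified Lean document; each statement's English description precedes it below -/
import Mathlib

section
/- Let U ⊆ ℝ² be an open set, let g : [0,1] → ℝ² be a polygonal curve with image contained in U, and let δ > 0. Then there exists a simple (injective) curve h : [0,1] → ℝ² with image contained in U such that the Hausdorff distance between the images g([0,1]) and h([0,1]) is at most δ. (Any polygonal curve in an open planar region can be approximated arbitrarily well, in Hausdorff distance, by a simple curve in the same region.) -/
/-- A curve `g : [0,1] → ℝ²` is polygonal if there is a partition
`0 = u₀ < u₁ < … < u_k = 1` of the unit interval such that on each subinterval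
`[uᵢ, uᵢ₊₁]` the curve is an affine function of the parameter. -/
def IsPolygonal (g : unitInterval → EuclideanSpace ℝ (Fin 2)) : Prop :=
  ∃ k : ℕ, ∃ u : Fin (k + 1) → unitInterval,
    StrictMono u ∧ u 0 = 0 ∧ u (Fin.last k) = 1 ∧
    ∀ i : Fin k, ∃ a v : EuclideanSpace ℝ (Fin 2),
      ∀ t : unitInterval, u i.castSucc ≤ t → t ≤ u i.succ →
        g t = a + (t : ℝ) • v

/-- Removing a point from an open preconnected subset of the plane keeps it preconnected. -/
lemma preconnected_diff_singleton {V : Set (EuclideanSpace ℝ (Fin 2))} (hV : IsOpen V)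
    (hc : IsPreconnected V) (x : EuclideanSpace ℝ (Fin 2)) : IsPreconnected (V \ {x}) := by
  by_cases hx : x ∈ V
  swap
  · rwa [Set.sdiff_singleton_eq_self hx]
  obtain ⟨r, hr, hrV⟩ := Metric.isOpen_iff.1 hV x hx
  have hrank : 1 < Module.rank ℝ (EuclideanSpace ℝ (Fin 2)) := by
    rw [← Module.finrank_eq_rank, finrank_euclideanSpace_fin]
    norm_num
  have hP : IsPreconnected (Metric.ball x r \ {x}) := by
    have h0 := (isConnected_compl_singleton_of_one_lt_rank hrank
      (0 : EuclideanSpace ℝ (Fin 2))).isPreconnected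
    have h1 := h0.image (OpenPartialHomeomorph.univBall x r)
      (OpenPartialHomeomorph.continuous_univBall x r).continuousOn
    convert h1 using 1
    have hinj : Function.Injective (OpenPartialHomeomorph.univBall x r) := by
      have := (OpenPartialHomeomorph.univBall x r).injOn
      rwa [OpenPartialHomeomorph.univBall_source, Set.injOn_univ] at this
    have him := (OpenPartialHomeomorph.univBall x r).image_source_eq_target
    rw [OpenPartialHomeomorph.univBall_source, OpenPartialHomeomorph.univBall_target x hr] at him
    rw [Set.compl_eq_univ_sdiff, Set.image_sdiff hinj, him, Set.image_singleton,
      OpenPartialHomeomorph.univBall_apply_zero]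
  have key : ∀ u v : Set (EuclideanSpace ℝ (Fin 2)), IsOpen u → IsOpen v → V \ {x} ⊆ u ∪ v →
      (V \ {x}) ∩ (u ∩ v) = ∅ → Metric.ball x r \ {x} ⊆ u → V \ {x} ⊆ u := by
    intro u v hu hv hcov hdis hsub
    have h2 := (isPreconnected_iff_subset_of_disjoint.1 hc) (u ∪ Metric.ball x r) (v \ {x})
      (hu.union Metric.isOpen_ball) (hv.sdiff isClosed_singleton) ?_ ?_
    · rcases h2 with h2 | h2
      · intro y hy
        rcases h2 hy.1 with h | h
        · exact h
        · exact hsub ⟨h, hy.2⟩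
      · exact absurd rfl (h2 hx).2
    · intro y hy
      by_cases hyx : y = x
      · left; right; rw [hyx]; exact Metric.mem_ball_self hr
      · rcases hcov ⟨hy, hyx⟩ with h | h
        · left; left; exact h
        · right; exact ⟨h, hyx⟩
    · rw [Set.eq_empty_iff_forall_notMem]
      rintro y ⟨hyV, hyu, hyv, hyx⟩
      have hyu' : y ∈ u := by
        rcases hyu with h | h
        · exact h
        · exact hsub ⟨h, hyx⟩
      have : y ∈ (V \ {x}) ∩ (u ∩ v) := ⟨⟨hyV, hyx⟩, hyu', hyv⟩
      rw [hdis] at this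
      exact this
  rw [isPreconnected_iff_subset_of_disjoint]
  intro u v hu hv hcov hdis
  have hPV : Metric.ball x r \ {x} ⊆ V \ {x} := Set.sdiff_subset_sdiff_left hrV
  have h3 := (isPreconnected_iff_subset_of_disjoint.1 hP) u v hu hv (hPV.trans hcov)
    (Set.subset_eq_empty (Set.inter_subset_inter_left _ hPV) hdis)
  rcases h3 with h3 | h3
  · exact Or.inl (key u v hu hv hcov hdis h3)
  · exact Or.inr (key v u hv hu (by rwa [Set.union_comm]) (by rwa [Set.inter_comm v u]) h3)

/-- Removing finitely many points from an open preconnected planar set. -/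
lemma preconnected_diff_finite {V : Set (EuclideanSpace ℝ (Fin 2))} (hV : IsOpen V)
    (hc : IsPreconnected V) {S : Set (EuclideanSpace ℝ (Fin 2))} (hS : S.Finite) :
    IsPreconnected (V \ S) := by
  induction S, hS using Set.Finite.induction_on with
  | empty => simpa using hc
  | @insert a s _ hs ih =>
    have := preconnected_diff_singleton (hV.sdiff hs.isClosed) ih a
    rwa [Set.sdiff_sdiff, Set.union_singleton] at this

/-- An injective continuous self-map of the plane, the identity off a ball,
moving the centre of the ball to a given point of the ball. -/
lemma exists_push (c p : EuclideanSpace ℝ (Fin 2)) (r : ℝ) (hp : p ∈ Metric.ball c r) :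
    ∃ f : EuclideanSpace ℝ (Fin 2) → EuclideanSpace ℝ (Fin 2),
      Continuous f ∧ Function.Injective f ∧ f c = p ∧ (∀ x ∉ Metric.ball c r, f x = x) ∧
      ∀ x ∈ Metric.ball c r, f x ∈ Metric.ball c r := by
  have hr : 0 < r := Metric.pos_of_mem_ball hp
  have hpc : ‖p - c‖ < r := by rwa [mem_ball_iff_norm] at hp
  refine ⟨fun x => x + (max 0 (1 - ‖x - c‖ / r)) • (p - c), by fun_prop, ?_, by simp, ?_, ?_⟩
  · intro x y hxy
    simp only at hxy
    have h1 : x - y = (max 0 (1 - ‖y - c‖ / r) - max 0 (1 - ‖x - c‖ / r)) • (p - c) := by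
      rw [sub_smul, sub_eq_sub_iff_add_eq_add, hxy, add_comm]
    have h2 : |max 0 (1 - ‖y - c‖ / r) - max 0 (1 - ‖x - c‖ / r)| ≤ ‖x - y‖ / r := by
      have e1 : |‖x - c‖ - ‖y - c‖| ≤ ‖x - y‖ := by
        have := abs_norm_sub_norm_le (x - c) (y - c)
        rwa [sub_sub_sub_cancel_right] at this
      calc _ ≤ |(1 - ‖y - c‖ / r) - (1 - ‖x - c‖ / r)| := by
            rw [max_comm 0, max_comm 0]
            exact abs_max_sub_max_le_abs _ _ _
        _ = |‖x - c‖ - ‖y - c‖| / r := by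
            rw [← abs_of_pos hr, ← abs_div, abs_of_pos hr]
            congr 1
            ring
        _ ≤ _ := by gcongr
    by_contra hne
    have hpos : 0 < ‖x - y‖ := norm_pos_iff.2 (sub_ne_zero.2 hne)
    have h3 : ‖x - y‖ ≤ ‖x - y‖ / r * ‖p - c‖ := by
      calc ‖x - y‖ = |max 0 (1 - ‖y - c‖ / r) - max 0 (1 - ‖x - c‖ / r)| * ‖p - c‖ := by
            conv_lhs => rw [h1]
            rw [norm_smul, Real.norm_eq_abs]
        _ ≤ _ := by gcongr
    have h4 : ‖x - y‖ / r * ‖p - c‖ < ‖x - y‖ / r * r := by gcongr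
    rw [div_mul_cancel₀ _ hr.ne'] at h4
    linarith
  · intro x hx
    rw [mem_ball_iff_norm, not_lt] at hx
    have : 1 ≤ ‖x - c‖ / r := by rwa [le_div_iff₀ hr, one_mul]
    simp only
    rw [max_eq_left (by linarith), zero_smul, add_zero]
  · intro x hx
    rw [mem_ball_iff_norm] at hx ⊢
    have h1 : ‖x - c‖ / r < 1 := by rwa [div_lt_one hr]
    simp only
    rw [max_eq_right (by linarith)]
    have h2 : ‖x + (1 - ‖x - c‖ / r) • (p - c) - c‖ ≤ ‖x - c‖ + (1 - ‖x - c‖ / r) * ‖p - c‖ := by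
      rw [add_sub_right_comm]
      refine (norm_add_le _ _).trans ?_
      rw [norm_smul, Real.norm_eq_abs, abs_of_pos (by linarith)]
    have h3 : (1 - ‖x - c‖ / r) * ‖p - c‖ < (1 - ‖x - c‖ / r) * r := by
      apply mul_lt_mul_of_pos_left hpc; linarith
    have h4 : (1 - ‖x - c‖ / r) * r = r - ‖x - c‖ := by field_simp
    linarith

/-- Transitivity: in an open connected planar set `V` minus a finite set `S`, any point can be
moved to any other one by an injective continuous map preserving `V` and fixing `S`. -/
lemma exists_move {V S : Set (EuclideanSpace ℝ (Fin 2))} (hV : IsOpen V)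
    (hc : IsPreconnected V) (hS : S.Finite) {q p : EuclideanSpace ℝ (Fin 2)}
    (hq : q ∈ V \ S) (hp : p ∈ V \ S) :
    ∃ f : EuclideanSpace ℝ (Fin 2) → EuclideanSpace ℝ (Fin 2),
      Continuous f ∧ Function.Injective f ∧ f q = p ∧ (∀ x ∈ S, f x = x) ∧
      ∀ x ∈ V, f x ∈ V := by
  set R : Set (EuclideanSpace ℝ (Fin 2)) := {p | p ∈ V \ S ∧
    ∃ f : EuclideanSpace ℝ (Fin 2) → EuclideanSpace ℝ (Fin 2),
      Continuous f ∧ Function.Injective f ∧ f q = p ∧ (∀ x ∈ S, f x = x) ∧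
      ∀ x ∈ V, f x ∈ V} with hR
  have hW : IsOpen (V \ S) := hV.sdiff hS.isClosed
  have step : ∀ a ∈ R, ∀ r b, Metric.ball a r ⊆ V \ S → b ∈ Metric.ball a r → b ∈ R := by
    rintro a ⟨_, f, hf1, hf2, hf3, hf4, hf5⟩ r b hsub hb
    obtain ⟨e, he1, he2, he3, he4, he5⟩ := exists_push a b r hb
    refine ⟨hsub hb, e ∘ f, he1.comp hf1, he2.comp hf2, by simp [hf3, he3], ?_, ?_⟩
    · intro x hx
      simp only [Function.comp_apply, hf4 x hx]
      exact he4 x fun h => (hsub h).2 hx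
    · intro x hx
      simp only [Function.comp_apply]
      by_cases h : f x ∈ Metric.ball a r
      · exact (hsub (he5 _ h)).1
      · rw [he4 _ h]; exact hf5 x hx
  have hRo : IsOpen R := by
    rw [Metric.isOpen_iff]
    intro a ha
    obtain ⟨r, hr, hsub⟩ := Metric.isOpen_iff.1 hW a ha.1
    exact ⟨r, hr, fun b hb => step a ha r b hsub hb⟩
  have hall : V \ S ⊆ R := by
    refine (preconnected_diff_finite hV hc hS).subset_of_closure_inter_subset hRo
      ⟨q, hq, hq, id, continuous_id, Function.injective_id, rfl, fun _ _ => rfl, fun _ h => h⟩ ?_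
    rintro b ⟨hb, hbW⟩
    obtain ⟨r, hr, hsub⟩ := Metric.isOpen_iff.1 hW b hbW
    obtain ⟨a, ha, hab⟩ := Metric.mem_closure_iff.1 hb (r / 2) (by linarith)
    refine step a ha (r / 2) b ((Metric.ball_subset_ball' ?_).trans hsub) hab
    rw [dist_comm]; linarith
  exact (hall hp).2

/-- An open connected planar set contains an arc through any finite set of its points. -/
lemma exists_arc {V S : Set (EuclideanSpace ℝ (Fin 2))} (hV : IsOpen V)
    (hc : IsConnected V) (hS : S.Finite) (hSV : S ⊆ V) :
    ∃ h : unitInterval → EuclideanSpace ℝ (Fin 2),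
      Continuous h ∧ Function.Injective h ∧ Set.range h ⊆ V ∧ S ⊆ Set.range h := by
  induction S, hS using Set.Finite.induction_on with
  | empty =>
    obtain ⟨x, hx⟩ := hc.nonempty
    obtain ⟨r, hr, hrV⟩ := Metric.isOpen_iff.1 hV x hx
    obtain ⟨w, hw⟩ := exists_norm_eq (EuclideanSpace ℝ (Fin 2)) (c := r / 2) (by linarith)
    have hw0 : w ≠ 0 := by
      rintro rfl
      rw [norm_zero] at hw
      linarith
    refine ⟨fun t => x + (t : ℝ) • w, by fun_prop, ?_, ?_, Set.empty_subset _⟩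
    · intro s t hst
      have := add_left_cancel hst
      exact Subtype.ext (smul_left_injective ℝ hw0 this)
    · rintro _ ⟨t, rfl⟩
      apply hrV
      rw [mem_ball_iff_norm]
      simp only [add_sub_cancel_left]
      rw [norm_smul, Real.norm_eq_abs, abs_of_nonneg t.2.1, hw]
      have := t.2.2
      nlinarith
  | @insert p s hps hs ih =>
    obtain ⟨h, h1, h2, h3, h4⟩ := ih ((Set.subset_insert _ _).trans hSV)
    have : Infinite unitInterval := (Set.Icc_infinite (zero_lt_one (α := ℝ))).to_subtype
    obtain ⟨q, hq, hqs⟩ := (Set.infinite_range_of_injective h2).exists_notMem_finite hs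
    obtain ⟨f, f1, f2, f3, f4, f5⟩ := exists_move hV hc.isPreconnected hs
      ⟨h3 hq, hqs⟩ ⟨hSV (Set.mem_insert _ _), hps⟩
    refine ⟨f ∘ h, f1.comp h1, f2.comp h2, ?_, ?_⟩
    · rintro _ ⟨t, rfl⟩
      exact f5 _ (h3 ⟨t, rfl⟩)
    · rintro y (rfl | hy)
      · obtain ⟨t, rfl⟩ := hq
        exact ⟨t, f3⟩
      · obtain ⟨t, ht⟩ := h4 hy
        exact ⟨t, by simp [ht, f4 y hy]⟩

lemma IsPolygonal.continuous {g : unitInterval → EuclideanSpace ℝ (Fin 2)} (hg : IsPolygonal g) :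
    Continuous g := by
  obtain ⟨k, u, -, h0, h1, haff⟩ := hg
  refine (locallyFinite_of_finite (fun i : Fin k => Set.Icc (u i.castSucc) (u i.succ))).continuous
    ?_ (fun _ => isClosed_Icc) ?_
  · rw [Set.eq_univ_iff_forall]
    intro t
    by_contra hcon
    simp only [Set.mem_iUnion, not_exists, Set.mem_Icc, not_and, not_le] at hcon
    have hall : ∀ j : Fin (k + 1), u j ≤ t := by
      intro j
      induction j using Fin.induction with
      | zero => rw [h0]; exact unitInterval.nonneg'
      | succ i ih => exact (hcon i ih).le
    cases k with
    | zero =>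
      have : (0 : unitInterval) = 1 := h0.symm.trans h1
      exact zero_ne_one this
    | succ m =>
      have := hcon (Fin.last m) (hall _)
      rw [Fin.succ_last, h1] at this
      exact absurd unitInterval.le_one' (not_le.2 this)
  · intro i
    obtain ⟨a, v, h⟩ := haff i
    have : ContinuousOn (fun t : unitInterval => a + (t : ℝ) • v)
      (Set.Icc (u i.castSucc) (u i.succ)) := by fun_prop
    exact this.congr fun t ht => h t ht.1 ht.2

/-- Any polygonal curve whose image lies in an open set `U ⊆ ℝ²` can
be approximated within any `δ > 0` in Hausdorff distance by a simple (injective)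
curve whose image also lies in `U`. -/
theorem exists_simple_curve_hausdorff_approx
    (U : Set (EuclideanSpace ℝ (Fin 2))) (hU : IsOpen U)
    (g : unitInterval → EuclideanSpace ℝ (Fin 2)) (hg : IsPolygonal g)
    (hgU : Set.range g ⊆ U) (δ : ℝ) (hδ : 0 < δ) :
    ∃ h : unitInterval → EuclideanSpace ℝ (Fin 2),
      Continuous h ∧ Function.Injective h ∧ Set.range h ⊆ U ∧
      Metric.hausdorffDist (Set.range g) (Set.range h) ≤ δ := by
  have hgc := hg.continuous
  set F := U ∩ Metric.thickening δ (Set.range g) with hF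
  have hFo : IsOpen F := hU.inter Metric.isOpen_thickening
  have hgF : Set.range g ⊆ F := Set.subset_inter hgU (Metric.self_subset_thickening hδ _)
  have hsub : Set.range g ⊆ connectedComponentIn F (g 0) :=
    (isPreconnected_range hgc).subset_connectedComponentIn ⟨0, rfl⟩ hgF
  obtain ⟨S, hSg, hS, hcov⟩ := (isCompact_range hgc).finite_cover_balls hδ
  obtain ⟨h, h1, h2, h3, h4⟩ := exists_arc (hFo.connectedComponentIn (x := g 0))
    (isConnected_connectedComponentIn_iff.2 (hgF ⟨0, rfl⟩)) hS (hSg.trans hsub)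
  have h5 := h3.trans (connectedComponentIn_subset F (g 0))
  refine ⟨h, h1, h2, h5.trans Set.inter_subset_left, ?_⟩
  refine Metric.hausdorffDist_le_of_mem_dist hδ.le ?_ ?_
  · intro x hx
    obtain ⟨y, hy, hxy⟩ := Set.mem_iUnion₂.1 (hcov hx)
    exact ⟨y, h4 hy, (Metric.mem_ball.1 hxy).le⟩
  · intro x hx
    obtain ⟨y, hy, hxy⟩ := Metric.mem_thickening_iff.1 (h5 hx).2
    exact ⟨y, hy, hxy.le⟩
end

section
/- Let U ⊆ ℝ² be an open set and let f : [0,1] → ℝ² be a polygonal curve. Then the infimum, over all simple (injective) polygonal curves h : [0,1] → ℝ² with image contained in U, of the Hausdorff distance between f([0,1]) and h([0,1]) equals the infimum, over all polygonal curves g : [0,1] → ℝ² with image contained in U, of the Hausdorff distance between f([0,1]) and g([0,1]). (Under the Hausdorff distance, the simple curve embedding problem and the unrestricted curve embedding problem have the same optimal value.) -/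
open unitInterval in
inductive PL {E : Type} [AddCommGroup E] [Module ℝ E] (g : I → E) : I → I → Prop
  | aff (a b : I) (hab : a ≤ b) (p v : E)
      (h : ∀ t : I, a ≤ t → t ≤ b → g t = p + (t : ℝ) • v) : PL g a b
  | trans (a b c : I) (h₁ : PL g a b) (h₂ : PL g b c) : PL g a c

namespace PL
variable {E F : Type} [AddCommGroup E] [Module ℝ E] [AddCommGroup F] [Module ℝ F]

theorem le {g : unitInterval → E} {a b : unitInterval} (h : PL g a b) : a ≤ b := by
  induction h with
  | aff a b hab p v h => exact hab
  | trans a b c _ _ h₁ h₂ => exact h₁.trans h₂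

theorem restrict {g : unitInterval → E} {a b : unitInterval} (h : PL g a b) :
    ∀ c d, a ≤ c → c ≤ d → d ≤ b → PL g c d := by
  induction h with
  | aff a b hab p v h =>
    intro c d hac hcd hdb
    exact PL.aff c d hcd p v (fun t h₁ h₂ => h t (hac.trans h₁) (h₂.trans hdb))
  | trans a b c _ _ h₁ h₂ =>
    intro x y hax hxy hyc
    rcases le_total y b with hy | hy
    · exact h₁ x y hax hxy hy
    rcases le_total b x with hx | hx
    · exact h₂ x y hx hxy hyc
    exact PL.trans x b y (h₁ x b hax hx le_rfl) (h₂ b y le_rfl hy hyc)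

theorem add {f g : unitInterval → E} {a b : unitInterval} (hf : PL f a b) (hg : PL g a b) :
    PL (fun t => f t + g t) a b := by
  induction hf with
  | aff a b hab p v h =>
    induction hg with
    | aff a b _ q w h' =>
      refine PL.aff a b hab (p + q) (v + w) (fun t h₁ h₂ => ?_)
      simp only [h t h₁ h₂, h' t h₁ h₂, smul_add]
      abel
    | trans a b c k₁ k₂ h₁ h₂ =>
      exact PL.trans a b c (h₁ k₁.le (fun t x y => h t x (y.trans k₂.le)))
        (h₂ k₂.le (fun t x y => h t (k₁.le.trans x) y))
  | trans a b c k₁ k₂ h₁ h₂ =>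
    exact PL.trans a b c (h₁ (hg.restrict _ _ le_rfl k₁.le k₂.le))
      (h₂ (hg.restrict _ _ k₁.le k₂.le le_rfl))

theorem map {f : unitInterval → E} {a b : unitInterval} (hf : PL f a b) (L : E →ₗ[ℝ] F) :
    PL (fun t => L (f t)) a b := by
  induction hf with
  | aff a b hab p v h =>
    exact PL.aff a b hab (L p) (L v) (fun t h₁ h₂ => by simp [h t h₁ h₂])
  | trans a b c k₁ k₂ h₁ h₂ => exact PL.trans a b c h₁ h₂

theorem const (c : E) {a b : unitInterval} (hab : a ≤ b) : PL (fun _ => c) a b :=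
  PL.aff a b hab c 0 (by simp)

theorem abs {f : unitInterval → ℝ} {a b : unitInterval} (hf : PL f a b) :
    PL (fun t => |f t|) a b := by
  have key₁ : ∀ (a b : unitInterval) (p v : ℝ), a ≤ b →
      (∀ t : unitInterval, a ≤ t → t ≤ b → f t = p + (t : ℝ) • v) →
      (∀ t : unitInterval, a ≤ t → t ≤ b → 0 ≤ p + (t : ℝ) * v) → PL (fun t => |f t|) a b := by
    intro a b p v hab h h0
    refine PL.aff a b hab p v (fun t h₁ h₂ => ?_)
    simp only [h t h₁ h₂, smul_eq_mul]
    exact abs_of_nonneg (h0 t h₁ h₂)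
  have key₂ : ∀ (a b : unitInterval) (p v : ℝ), a ≤ b →
      (∀ t : unitInterval, a ≤ t → t ≤ b → f t = p + (t : ℝ) • v) →
      (∀ t : unitInterval, a ≤ t → t ≤ b → p + (t : ℝ) * v ≤ 0) → PL (fun t => |f t|) a b := by
    intro a b p v hab h h0
    refine PL.aff a b hab (-p) (-v) (fun t h₁ h₂ => ?_)
    simp only [h t h₁ h₂, smul_eq_mul]
    rw [abs_of_nonpos (h0 t h₁ h₂)]
    ring
  induction hf with
  | aff a b hab p v h =>
    rcases eq_or_lt_of_le hab with rfl | hlt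
    · exact PL.aff a a le_rfl |f a| 0 (fun t x y => by simp [le_antisymm y x])
    have hab' : (a : ℝ) < b := hlt
    rcases le_total 0 (p + (a : ℝ) * v) with ha | ha <;>
    rcases le_total 0 (p + (b : ℝ) * v) with hb | hb
    · refine key₁ a b p v hab h (fun t h₁ h₂ => ?_)
      have h₁' : (a : ℝ) ≤ t := h₁
      have h₂' : (t : ℝ) ≤ b := h₂
      rcases le_total 0 v with hv | hv <;> nlinarith
    · rcases eq_or_ne v 0 with hv | hv
      · subst hv
        refine key₁ a b p 0 hab h (fun t h₁ h₂ => ?_)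
        simpa using ha
      have hv' : v < 0 := by
        by_contra hc
        have hv0 : 0 < v := lt_of_le_of_ne (not_lt.1 hc) hv.symm
        nlinarith
      have e : p + (-p / v) * v = 0 := by field_simp; ring
      have z1 : (a : ℝ) ≤ -p / v := by nlinarith
      have z2 : -p / v ≤ (b : ℝ) := by nlinarith
      let c : unitInterval := ⟨-p / v, a.2.1.trans z1, z2.trans b.2.2⟩
      refine PL.trans a c b
        (key₁ a c p v z1 (fun t x y => h t x (y.trans z2)) (fun t x y => ?_))
        (key₂ c b p v z2 (fun t x y => h t (le_trans (show a ≤ c from z1) x) y) (fun t x y => ?_))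
      · have : (t : ℝ) ≤ -p / v := y
        nlinarith
      · have : -p / v ≤ (t : ℝ) := x
        nlinarith
    · rcases eq_or_ne v 0 with hv | hv
      · subst hv
        refine key₂ a b p 0 hab h (fun t h₁ h₂ => ?_)
        simpa using ha
      have hv' : 0 < v := by
        by_contra hc
        have hv0 : v < 0 := lt_of_le_of_ne (not_lt.1 hc) hv
        nlinarith
      have e : p + (-p / v) * v = 0 := by field_simp; ring
      have z1 : (a : ℝ) ≤ -p / v := by nlinarith
      have z2 : -p / v ≤ (b : ℝ) := by nlinarith
      let c : unitInterval := ⟨-p / v, a.2.1.trans z1, z2.trans b.2.2⟩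
      refine PL.trans a c b
        (key₂ a c p v z1 (fun t x y => h t x (y.trans z2)) (fun t x y => ?_))
        (key₁ c b p v z2 (fun t x y => h t (le_trans (show a ≤ c from z1) x) y) (fun t x y => ?_))
      · have : (t : ℝ) ≤ -p / v := y
        nlinarith
      · have : -p / v ≤ (t : ℝ) := x
        nlinarith
    · refine key₂ a b p v hab h (fun t h₁ h₂ => ?_)
      have h₁' : (a : ℝ) ≤ t := h₁
      have h₂' : (t : ℝ) ≤ b := h₂
      rcases le_total 0 v with hv | hv <;> nlinarith
  | trans a b c k₁ k₂ h₁ h₂ => exact PL.trans a b c h₁ h₂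

theorem pos {f : unitInterval → ℝ} {a b : unitInterval} (hf : PL f a b) :
    PL (fun t => max 0 (f t)) a b := by
  have := ((hf.add hf.abs).map (LinearMap.lsmul ℝ ℝ (1 / 2 : ℝ)))
  convert this using 2 with t
  simp only [LinearMap.lsmul_apply, smul_eq_mul]
  rcases le_total 0 (f t) with h | h
  · rw [max_eq_right h, abs_of_nonneg h]; ring
  · rw [max_eq_left h, abs_of_nonpos h]; ring

theorem finset {g : unitInterval → E} {a b : unitInterval} (hg : PL g a b) :
    ∃ S : Finset unitInterval, a ∈ S ∧ b ∈ S ∧ (∀ s ∈ S, a ≤ s ∧ s ≤ b) ∧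
      ∀ x y, a ≤ x → x ≤ y → y ≤ b → (∀ s ∈ S, s ≤ x ∨ y ≤ s) →
        ∃ p v : E, ∀ t : unitInterval, x ≤ t → t ≤ y → g t = p + (t : ℝ) • v := by
  classical
  induction hg with
  | aff a b hab p v h =>
    refine ⟨{a, b}, by simp, by simp, by simp [hab], ?_⟩
    intro x y h₁ h₂ h₃ _
    exact ⟨p, v, fun t x y => h t (h₁.trans x) (y.trans h₃)⟩
  | trans a b c k₁ k₂ h₁ h₂ =>
    obtain ⟨S, hS1, hS2, hS3, hS4⟩ := h₁
    obtain ⟨T, hT1, hT2, hT3, hT4⟩ := h₂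
    refine ⟨S ∪ T, by simp [hS1], by simp [hT2], ?_, ?_⟩
    · intro s hs
      rcases Finset.mem_union.1 hs with hs | hs
      · exact ⟨(hS3 s hs).1, (hS3 s hs).2.trans k₂.le⟩
      · exact ⟨k₁.le.trans (hT3 s hs).1, (hT3 s hs).2⟩
    · intro x y hax hxy hyc hst
      rcases hst b (by simp [hS2]) with hb | hb
      · exact hT4 x y hb hxy hyc (fun s hs => hst s (by simp [hs]))
      · exact hS4 x y hax hxy hb (fun s hs => hst s (by simp [hs]))

theorem continuousOn {E : Type} [NormedAddCommGroup E] [NormedSpace ℝ E]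
    {g : unitInterval → E} {a b : unitInterval} (hg : PL g a b) :
    ContinuousOn g (Set.Icc a b) := by
  induction hg with
  | aff a b hab p v h =>
    refine ContinuousOn.congr (f := fun t : unitInterval => p + (t : ℝ) • v) ?_
      (fun t ht => h t ht.1 ht.2)
    fun_prop
  | trans a b c k₁ k₂ h₁ h₂ =>
    rw [← Set.Icc_union_Icc_eq_Icc k₁.le k₂.le]
    exact h₁.union_of_isClosed h₂ isClosed_Icc isClosed_Icc

end PL

theorem isPolygonal_iff (g : unitInterval → EuclideanSpace ℝ (Fin 2)) :
    IsPolygonal g ↔ PL g 0 1 := by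
  constructor
  · rintro ⟨k, u, hu, h0, h1, h⟩
    have : ∀ i : Fin (k + 1), PL g 0 (u i) := by
      intro i
      induction i using Fin.induction with
      | zero => rw [h0]; exact PL.aff 0 0 le_rfl (g 0) 0 (fun t x y => by simp [le_antisymm y x])
      | succ i ih =>
        obtain ⟨p, v, hp⟩ := h i
        exact PL.trans _ _ _ ih (PL.aff _ _ (hu.monotone (Fin.castSucc_lt_succ).le) p v hp)
    rw [← h1]; exact this _
  · intro hg
    obtain ⟨S, h0, h1, hS, h⟩ := hg.finset
    have hc : S.card ≠ 0 := Finset.card_ne_zero_of_mem h0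
    obtain ⟨k, hk⟩ := Nat.exists_eq_succ_of_ne_zero hc
    have hsurj : ∀ s ∈ S, ∃ j, S.orderEmbOfFin hk j = s := by
      intro s hs
      have : s ∈ Set.range (S.orderEmbOfFin hk) := by
        rw [Finset.range_orderEmbOfFin]; exact hs
      exact this
    refine ⟨k, S.orderEmbOfFin hk, (S.orderEmbOfFin hk).strictMono, ?_, ?_, ?_⟩
    · obtain ⟨j, hj⟩ := hsurj 0 h0
      refine le_antisymm ?_ (unitInterval.nonneg _)
      rw [← hj]
      exact (S.orderEmbOfFin hk).monotone (Fin.zero_le j)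
    · obtain ⟨j, hj⟩ := hsurj 1 h1
      refine le_antisymm (unitInterval.le_one _) ?_
      rw [← hj]
      exact (S.orderEmbOfFin hk).monotone (Fin.le_last j)
    · intro i
      refine h _ _ (unitInterval.nonneg _)
        ((S.orderEmbOfFin hk).monotone (Fin.castSucc_lt_succ).le) (unitInterval.le_one _) ?_
      intro s hs
      obtain ⟨j, rfl⟩ := hsurj s hs
      rcases le_or_gt j i.castSucc with hj | hj
      · exact Or.inl ((S.orderEmbOfFin hk).monotone hj)
      · exact Or.inr ((S.orderEmbOfFin hk).monotone (by rw [Fin.lt_def] at hj; rw [Fin.le_def]; simpa using hj))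

abbrev Plane := EuclideanSpace ℝ (Fin 2)

/-- The planar determinant, linear in the second vector. -/
noncomputable def detL (w : Plane) : Plane →ₗ[ℝ] ℝ where
  toFun z := w 0 * z 1 - w 1 * z 0
  map_add' x y := by simp; ring
  map_smul' c x := by simp; ring

noncomputable def dotL (w : Plane) : Plane →ₗ[ℝ] ℝ where
  toFun z := (w 0 * z 0 + w 1 * z 1) / (w 0 ^ 2 + w 1 ^ 2)
  map_add' x y := by simp; ring
  map_smul' c x := by simp; ring

theorem plane_norm_sq (w : Plane) : ‖w‖ ^ 2 = w 0 ^ 2 + w 1 ^ 2 := by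
  rw [EuclideanSpace.norm_sq_eq]; simp

theorem exists_move_s5 (P w : Plane) (hw : w ≠ 0) (F : Finset Plane)
    (hF : ∀ x ∈ F, detL w (x - P) ≠ 0) :
    ∃ φ : Plane → Plane, Function.Injective φ ∧ φ P = P + w ∧ (∀ x ∈ F, φ x = x) ∧
      (∀ z, φ z = z ∨ dist (φ z) P ≤ 4 * ‖w‖) ∧
      ∀ h : unitInterval → Plane, PL h 0 1 → PL (fun t => φ (h t)) 0 1 := by
  have hW : 0 < w 0 ^ 2 + w 1 ^ 2 := by
    rw [← plane_norm_sq]; positivity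
  set W := w 0 ^ 2 + w 1 ^ 2 with hWd
  obtain ⟨M, hM1, hM2⟩ : ∃ M : ℝ, 1 ≤ M * W ∧ ∀ x ∈ F, 1 ≤ M * |detL w (x - P)| := by
    refine ⟨1 / W + ∑ x ∈ F, 1 / |detL w (x - P)|, ?_, ?_⟩
    · have : 0 ≤ ∑ x ∈ F, 1 / |detL w (x - P)| := Finset.sum_nonneg (fun _ _ => by positivity)
      have e : 1 / W * W = 1 := by field_simp
      nlinarith
    · intro x hx
      have h1 : 1 / |detL w (x - P)| ≤ ∑ x ∈ F, 1 / |detL w (x - P)| :=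
        Finset.single_le_sum (f := fun x => 1 / |detL w (x - P)|) (fun _ _ => by positivity) hx
      have h2 : 0 < |detL w (x - P)| := abs_pos.2 (hF x hx)
      have e : 1 / |detL w (x - P)| * |detL w (x - P)| = 1 := by field_simp
      have : 0 < 1 / W := by positivity
      nlinarith
  have hM0 : 0 < M := by
    by_contra hc
    nlinarith [not_lt.1 hc]
  let l : Plane → ℝ := fun z =>
    max 0 (1 - ((1 / 2) * |dotL w (z - P)| + M * |detL w (z - P)|))
  have hl0 : ∀ z, 0 ≤ l z := fun z => le_max_left _ _
  have hl1 : ∀ z, l z ≤ 1 := fun z => max_le zero_le_one (by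
    have : 0 ≤ (1 / 2) * |dotL w (z - P)| + M * |detL w (z - P)| := by positivity
    linarith)
  have hdotw : dotL w w = 1 := by
    change (w 0 * w 0 + w 1 * w 1) / W = 1
    rw [div_eq_one_iff_eq hW.ne', hWd]; ring
  have hdetw : detL w w = 0 := by
    change w 0 * w 1 - w 1 * w 0 = 0
    ring
  refine ⟨fun z => z + l z • w, ?_, ?_, ?_, ?_, ?_⟩
  · intro z z' hz
    simp only at hz
    have h1 : z' = z + (l z - l z') • w := by
      rw [sub_smul, ← add_sub_assoc, hz]; abel
    set d := l z - l z' with hd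
    have h2 : z' - P = (z - P) + d • w := by rw [h1]; abel
    have h3 : dotL w (z' - P) = dotL w (z - P) + d := by
      rw [h2, map_add, map_smul, hdotw]; simp
    have h4 : detL w (z' - P) = detL w (z - P) := by
      rw [h2, map_add, map_smul, hdetw]; simp
    have h5 : |d| ≤ (1 / 2) * |d| := by
      have := abs_max_sub_max_le_max 0 (1 - ((1 / 2) * |dotL w (z - P)| + M * |detL w (z - P)|))
        0 (1 - ((1 / 2) * |dotL w (z' - P)| + M * |detL w (z' - P)|))
      rw [sub_self, abs_zero] at this
      replace this := this.trans_eq (max_eq_right (abs_nonneg _))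
      refine (show |d| ≤ _ from this).trans ?_
      rw [h3, h4]
      have e : 1 - ((1 / 2) * |dotL w (z - P)| + M * |detL w (z - P)|) -
        (1 - ((1 / 2) * |dotL w (z - P) + d| + M * |detL w (z - P)|)) =
          (1 / 2) * (|dotL w (z - P) + d| - |dotL w (z - P)|) := by ring
      rw [e, abs_mul, abs_of_pos (by norm_num : (0 : ℝ) < 1 / 2)]
      have := abs_abs_sub_abs_le_abs_sub (dotL w (z - P) + d) (dotL w (z - P))
      rw [add_sub_cancel_left] at this
      linarith
    have h6 : d = 0 := abs_eq_zero.1 (le_antisymm (by linarith) (abs_nonneg d))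
    rw [h1, h6]; simp
  · have : l P = 1 := by simp [l]
    simp [this]
  · intro x hx
    have : l x = 0 := by
      refine max_eq_left ?_
      have := hM2 x hx
      have : 0 ≤ |dotL w (x - P)| := abs_nonneg _
      linarith
    simp [this]
  · intro z
    rcases (hl0 z).eq_or_lt with h | h
    · left; simp [← h]
    right
    have h1 : 0 < 1 - ((1 / 2) * |dotL w (z - P)| + M * |detL w (z - P)|) := by
      by_contra hc
      have : l z = 0 := max_eq_left (not_lt.1 hc)
      linarith
    have h2 : |dotL w (z - P)| < 2 := by
      have : 0 ≤ M * |detL w (z - P)| := by positivity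
      linarith
    have h3 : |detL w (z - P)| < W := by
      have : 0 ≤ |dotL w (z - P)| := abs_nonneg _
      have : M * |detL w (z - P)| < M * W := by linarith
      exact lt_of_mul_lt_mul_left this hM0.le
    have h4 : ‖z - P‖ ^ 2 ≤ 5 * W := by
      have e : W * ‖z - P‖ ^ 2 = (W * dotL w (z - P)) ^ 2 + detL w (z - P) ^ 2 := by
        have e1 : W * dotL w (z - P) = w 0 * (z - P) 0 + w 1 * (z - P) 1 := by
          change W * ((w 0 * (z - P) 0 + w 1 * (z - P) 1) / W) = _
          field_simp
        have e2 : detL w (z - P) = w 0 * (z - P) 1 - w 1 * (z - P) 0 := rfl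
        rw [e1, e2, plane_norm_sq, hWd]; ring
      have f1 : dotL w (z - P) ^ 2 ≤ 4 := by
        rw [← sq_abs]; nlinarith [abs_nonneg (dotL w (z - P))]
      have f2 : detL w (z - P) ^ 2 ≤ W ^ 2 := by
        rw [← sq_abs]; nlinarith [abs_nonneg (detL w (z - P))]
      have : W * ‖z - P‖ ^ 2 ≤ W * (5 * W) := by
        rw [e, mul_pow]; nlinarith [sq_nonneg W]
      exact le_of_mul_le_mul_left this hW
    have h5 : ‖z - P‖ ≤ 3 * ‖w‖ := by
      rw [hWd, ← plane_norm_sq] at h4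
      refine abs_le_of_sq_le_sq' ?_ (by positivity) |>.2
      nlinarith [norm_nonneg w, sq_nonneg ‖w‖]
    have h6 : ‖l z • w‖ ≤ ‖w‖ := by
      rw [norm_smul, Real.norm_of_nonneg (hl0 z)]
      nlinarith [hl1 z, norm_nonneg w]
    rw [dist_eq_norm]
    calc ‖z + l z • w - P‖ = ‖(z - P) + l z • w‖ := by congr 1; abel
      _ ≤ ‖z - P‖ + ‖l z • w‖ := norm_add_le _ _
      _ ≤ 4 * ‖w‖ := by linarith
  · intro h hh
    have k0 : PL (fun t => h t - P) 0 1 := by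
      simpa only [sub_eq_add_neg] using hh.add (PL.const (-P) zero_le_one)
    have k1 := (k0.map (dotL w)).abs.map (LinearMap.lsmul ℝ ℝ (-(1 / 2) : ℝ))
    have k2 := (k0.map (detL w)).abs.map (LinearMap.lsmul ℝ ℝ (-M))
    have k3 := ((PL.const (1 : ℝ) zero_le_one).add (k1.add k2)).pos
    have k4 := k3.map ((LinearMap.lsmul ℝ Plane).flip w)
    convert hh.add k4 using 4 with t
    simp only [LinearMap.lsmul_apply, smul_eq_mul, LinearMap.flip_apply, l]
    congr 2
    ring

theorem exists_dir (c : Plane) (r : ℝ) (hr : 0 < r) (F : Finset Plane) (hF : ∀ v ∈ F, v ≠ 0) :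
    ∃ w, dist w c < r ∧ ∀ v ∈ F, detL w v ≠ 0 := by
  induction F using Finset.induction_on generalizing c r with
  | empty => exact ⟨c, by simpa using hr, by simp⟩
  | insert v F hv ih =>
    obtain ⟨w, hw, hwF⟩ := ih c r hr (fun x hx => hF x (Finset.mem_insert_of_mem hx))
    have hv0 : v ≠ 0 := hF v (Finset.mem_insert_self _ _)
    let n : Plane := !₂[v 1, -v 0]
    have hdet : ∀ s : ℝ, ∀ x : Plane, detL (w + s • n) x = detL w x + s * (v 1 * x 1 + v 0 * x 0) := by
      intro s x
      change (w + s • n) 0 * x 1 - (w + s • n) 1 * x 0 = w 0 * x 1 - w 1 * x 0 + _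
      simp [n]; ring
    have hcont : ContinuousAt (fun s : ℝ => w + s • n) 0 := by fun_prop
    have e1 : ∀ᶠ s : ℝ in nhds 0, dist (w + s • n) c < r := by
      have : ContinuousAt (fun s : ℝ => dist (w + s • n) c) 0 := by fun_prop
      exact this.eventually (gt_mem_nhds (by simpa using hw))
    have e2 : ∀ᶠ s : ℝ in nhds 0, ∀ x ∈ F, detL (w + s • n) x ≠ 0 := by
      rw [Filter.eventually_all_finset]
      intro x hx
      simp only [hdet]
      have : ContinuousAt (fun s : ℝ => detL w x + s * (v 1 * x 1 + v 0 * x 0)) 0 := by fun_prop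
      exact this.eventually_ne (by simpa using hwF x hx)
    have hvv : 0 < v 1 * v 1 + v 0 * v 0 := by
      have : 0 < ‖v‖ ^ 2 := by positivity
      rw [plane_norm_sq] at this; linarith
    have e3 : ∀ᶠ s : ℝ in nhdsWithin 0 {0}ᶜ, detL (w + s • n) v ≠ 0 := by
      simp only [hdet]
      by_cases h0 : detL w v = 0
      · filter_upwards [self_mem_nhdsWithin] with s hs
        rw [h0, zero_add]
        exact mul_ne_zero hs hvv.ne'
      · have : ContinuousAt (fun s : ℝ => detL w v + s * (v 1 * v 1 + v 0 * v 0)) 0 := by fun_prop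
        exact (this.eventually_ne (by simpa using h0)).filter_mono nhdsWithin_le_nhds
    obtain ⟨s, ⟨h1, h2⟩, h3⟩ := (((e1.and e2).filter_mono nhdsWithin_le_nhds).and e3).exists
    refine ⟨w + s • n, h1, ?_⟩
    intro x hx
    rcases Finset.mem_insert.1 hx with rfl | hx
    · exact h3
    · exact h2 x hx

theorem PL.continuous' {h : unitInterval → Plane} (hh : PL h 0 1) : Continuous h := by
  have := hh.continuousOn
  rw [← continuousOn_univ]
  refine this.mono (fun t _ => ⟨unitInterval.nonneg t, unitInterval.le_one t⟩)

theorem exists_simple (p : ℕ → Plane) (r : ℝ) (hr : 0 < r)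
    (hp : ∀ i, dist (p i) (p (i + 1)) < r) (n : ℕ) :
    ∃ h : unitInterval → Plane, PL h 0 1 ∧ Function.Injective h ∧
      (∀ s, ∃ i, dist (h s) (p i) < 20 * r) ∧
      ∃ t : ℕ → unitInterval, ∀ i ≤ n, dist (h (t i)) (p i) < r := by
  classical
  induction n with
  | zero =>
    let e : Plane := !₂[r, 0]
    have he : e ≠ 0 := by
      intro h
      have : e 0 = 0 := by rw [h]; rfl
      simp [e] at this
      exact hr.ne' this
    have hne : ‖e‖ = r := by
      have : ‖e‖ ^ 2 = r ^ 2 := by rw [plane_norm_sq]; simp [e]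
      exact (sq_eq_sq₀ (norm_nonneg _) hr.le).1 this
    refine ⟨fun t => p 0 + (t : ℝ) • e, PL.aff 0 1 zero_le_one (p 0) e (fun _ _ _ => rfl), ?_, ?_,
      fun _ => 0, ?_⟩
    · intro s t hst
      have := smul_left_injective ℝ he (add_left_cancel hst)
      exact Subtype.ext this
    · intro s
      refine ⟨0, ?_⟩
      rw [dist_eq_norm, add_sub_cancel_left, norm_smul, hne, Real.norm_of_nonneg s.2.1]
      nlinarith [s.2.2]
    · intro i hi
      obtain rfl : i = 0 := by omega
      simpa using hr
  | succ n ih =>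
    obtain ⟨h, hPL, hinj, hV, t, ht⟩ := ih
    have hc := hPL.continuous'
    let T : Finset unitInterval := (Finset.range (n + 1)).image t
    obtain ⟨τ, hτ, hτT⟩ : ∃ τ, dist (h τ) (p n) < r ∧ τ ∉ T := by
      have hd : Dense (Set.univ \ (T : Set unitInterval)) := dense_univ.sdiff_finset T
      have ho : IsOpen {τ | dist (h τ) (p n) < r} := isOpen_lt (by fun_prop) (by fun_prop)
      obtain ⟨τ, h1, h2⟩ := hd.inter_open_nonempty _ ho ⟨t n, ht n le_rfl⟩
      exact ⟨τ, h1, fun h => h2.2 h⟩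
    let F : Finset Plane := T.image h
    have hPF : ∀ x ∈ F, x ≠ h τ := by
      intro x hx hxe
      obtain ⟨s, hs, rfl⟩ := Finset.mem_image.1 hx
      exact hτT (hinj hxe ▸ hs)
    obtain ⟨w, hw, hwF⟩ := exists_dir (p (n + 1) - h τ) r hr (F.image (fun x => x - h τ)) (by
      intro v hv
      obtain ⟨x, hx, rfl⟩ := Finset.mem_image.1 hv
      exact sub_ne_zero.2 (hPF x hx))
    have hwF' : ∀ x ∈ F, detL w (x - h τ) ≠ 0 := fun x hx =>
      hwF _ (Finset.mem_image_of_mem _ hx)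
    have htF : ∀ i ≤ n, h (t i) ∈ F := fun i hi =>
      Finset.mem_image_of_mem _ (Finset.mem_image_of_mem _ (by simp; omega))
    have hw0 : w ≠ 0 := by
      rintro rfl
      apply hwF' _ (htF n le_rfl)
      change (0 : Plane) 0 * _ - (0 : Plane) 1 * _ = 0
      simp
    obtain ⟨φ, φinj, φP, φF, φs, φPL⟩ := exists_move_s5 (h τ) w hw0 F hwF'
    have hd : dist (h τ + w) (p (n + 1)) < r := by
      rw [dist_eq_norm] at hw ⊢
      convert hw using 2; abel
    have hwn : ‖w‖ < 3 * r := by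
      have e : ‖w‖ = dist (h τ + w) (h τ) := by simp [dist_eq_norm]
      rw [e]
      have a1 := dist_triangle (h τ + w) (p (n + 1)) (h τ)
      have a2 := dist_triangle (p (n + 1)) (p n) (h τ)
      have := hp n
      rw [dist_comm] at this hτ
      linarith
    refine ⟨fun s => φ (h s), φPL h hPL, φinj.comp hinj, ?_,
      fun i => if i ≤ n then t i else τ, ?_⟩
    · intro s
      rcases φs (h s) with hs | hs
      · simp only [hs]; exact hV s
      · refine ⟨n, ?_⟩
        have := dist_triangle (φ (h s)) (h τ) (p n)
        linarith
    · intro i hi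
      by_cases hin : i ≤ n
      · simp only [hin, if_true]
        rw [φF _ (htF i hin)]
        exact ht i hin
      · obtain rfl : i = n + 1 := by omega
        simp only [hin, if_false, φP]
        exact hd

theorem approx (U : Set Plane) (hU : IsOpen U) (g : unitInterval → Plane)
    (hg : IsPolygonal g) (hgU : Set.range g ⊆ U) (ε : ℝ) (hε : 0 < ε) :
    ∃ h : unitInterval → Plane, IsPolygonal h ∧ Function.Injective h ∧ Set.range h ⊆ U ∧
      Metric.hausdorffDist (Set.range g) (Set.range h) ≤ ε := by
  have hc : Continuous g := ((isPolygonal_iff g).1 hg).continuous'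
  obtain ⟨δ, hδ, hδU⟩ := (isCompact_range hc).exists_thickening_subset_open hU hgU
  let r := min δ ε / 20
  have hr : 0 < r := by have := lt_min hδ hε; positivity
  have hrδ : 20 * r ≤ δ := by have := min_le_left δ ε; simp only [r]; linarith
  have hrε : 20 * r ≤ ε := by have := min_le_right δ ε; simp only [r]; linarith
  have huc : UniformContinuous g := CompactSpace.uniformContinuous_of_continuous hc
  obtain ⟨η, hη, hgη⟩ := Metric.uniformContinuous_iff.1 huc r hr
  obtain ⟨N, hN⟩ := exists_nat_one_div_lt hη
  have hN0 : (0 : ℝ) < N + 1 := by positivity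
  let q : ℕ → unitInterval := fun i => Set.projIcc 0 1 zero_le_one ((i : ℝ) / (N + 1))
  have hq : ∀ i, dist (q i) (q (i + 1)) < η := by
    intro i
    have h1 : dist (q i) (q (i + 1)) ≤ dist ((i : ℝ) / (N + 1)) (((i + 1 : ℕ) : ℝ) / (N + 1)) := by
      have := (LipschitzWith.projIcc (zero_le_one (α := ℝ))).dist_le_mul ((i : ℝ) / (N + 1)) (((i + 1 : ℕ) : ℝ) / (N + 1))
      simpa only [NNReal.coe_one, one_mul] using this
    refine h1.trans_lt ?_
    rw [Real.dist_eq]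
    have : (i : ℝ) / (N + 1) - ((i + 1 : ℕ) : ℝ) / (N + 1) = -(1 / (N + 1)) := by
      push_cast; ring
    rw [this, abs_neg, abs_of_pos (by positivity)]
    exact hN
  obtain ⟨h, hPL, hinj, hV, t, ht⟩ := exists_simple (fun i => g (q i)) r hr
    (fun i => hgη (hq i)) (N + 1)
  refine ⟨h, (isPolygonal_iff h).2 hPL, hinj, ?_, ?_⟩
  · rintro _ ⟨s, rfl⟩
    obtain ⟨i, hi⟩ := hV s
    apply hδU
    rw [Metric.mem_thickening_iff]
    exact ⟨_, ⟨q i, rfl⟩, hi.trans_le hrδ⟩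
  · refine Metric.hausdorffDist_le_of_mem_dist hε.le ?_ ?_
    · rintro _ ⟨s, rfl⟩
      let i := ⌊(s : ℝ) * (N + 1)⌋₊
      have hs0 := s.2.1
      have hs1 := s.2.2
      have hi1 : (i : ℝ) ≤ s * (N + 1) := Nat.floor_le (by positivity)
      have hi2 : (s : ℝ) * (N + 1) < i + 1 := Nat.lt_floor_add_one _
      have hiN : i ≤ N + 1 := by
        have : (i : ℝ) ≤ (N + 1 : ℕ) := by push_cast; nlinarith
        exact_mod_cast this
      have hd : dist s (q i) < η := by
        have h1 : (i : ℝ) / (N + 1) ≤ s := by rw [div_le_iff₀ hN0]; exact hi1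
        have h2 : ((q i : unitInterval) : ℝ) = (i : ℝ) / (N + 1) := by
          simp only [q]
          rw [Set.projIcc_of_mem zero_le_one ⟨by positivity, h1.trans hs1⟩]
        have h3 : (s : ℝ) - (i : ℝ) / (N + 1) < 1 / (N + 1) := by
          have : (s : ℝ) < (i + 1) / (N + 1) := by rw [lt_div_iff₀ hN0]; exact hi2
          rw [add_div] at this; linarith
        rw [Subtype.dist_eq, h2, Real.dist_eq, abs_of_nonneg (by linarith)]
        linarith
      refine ⟨_, ⟨t i, rfl⟩, ?_⟩
      have a1 := dist_triangle (g s) (g (q i)) (h (t i))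
      have a2 := ht i hiN
      have a3 := hgη hd
      rw [dist_comm] at a2
      linarith
    · rintro _ ⟨s, rfl⟩
      obtain ⟨i, hi⟩ := hV s
      exact ⟨_, ⟨q i, rfl⟩, by linarith⟩

/-- Under the Hausdorff distance, the optimal value of the simple
curve embedding problem (infimum over simple polygonal curves in `U`) equals the
optimal value of the unrestricted curve embedding problem (infimum over
polygonal curves in `U`). -/
theorem simple_curve_embedding_hausdorff_eq
    (U : Set (EuclideanSpace ℝ (Fin 2))) (hU : IsOpen U)
    (f : unitInterval → EuclideanSpace ℝ (Fin 2)) (hf : IsPolygonal f) :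
    sInf {e : ℝ | ∃ h : unitInterval → EuclideanSpace ℝ (Fin 2),
        IsPolygonal h ∧ Function.Injective h ∧ Set.range h ⊆ U ∧
        e = Metric.hausdorffDist (Set.range f) (Set.range h)} =
    sInf {e : ℝ | ∃ g : unitInterval → EuclideanSpace ℝ (Fin 2),
        IsPolygonal g ∧ Set.range g ⊆ U ∧
        e = Metric.hausdorffDist (Set.range f) (Set.range g)} := by
  have hfc : Continuous f := ((isPolygonal_iff f).1 hf).continuous'
  have key : ∀ g : unitInterval → EuclideanSpace ℝ (Fin 2), IsPolygonal g → Set.range g ⊆ U →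
      ∀ ε > 0, ∃ h : unitInterval → EuclideanSpace ℝ (Fin 2),
        IsPolygonal h ∧ Function.Injective h ∧ Set.range h ⊆ U ∧
        Metric.hausdorffDist (Set.range f) (Set.range h) ≤
          Metric.hausdorffDist (Set.range f) (Set.range g) + ε := by
    intro g hg hgU ε hε
    obtain ⟨h, h1, h2, h3, h4⟩ := approx U hU g hg hgU ε hε
    refine ⟨h, h1, h2, h3, ?_⟩
    have hgc : Continuous g := ((isPolygonal_iff g).1 hg).continuous'
    have := Metric.hausdorffDist_triangle (u := Set.range h)
      (Metric.hausdorffEDist_ne_top_of_nonempty_of_bounded (Set.range_nonempty f)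
        (Set.range_nonempty g) (isCompact_range hfc).isBounded (isCompact_range hgc).isBounded)
    linarith
  by_cases hne : ∃ g : unitInterval → EuclideanSpace ℝ (Fin 2), IsPolygonal g ∧ Set.range g ⊆ U
  · obtain ⟨g₀, hg₀, hg₀U⟩ := hne
    obtain ⟨h₀, k1, k2, k3, -⟩ := key g₀ hg₀ hg₀U 1 one_pos
    apply le_antisymm
    · refine le_csInf ⟨_, g₀, hg₀, hg₀U, rfl⟩ ?_
      rintro _ ⟨g, hg, hgU, rfl⟩
      refine le_of_forall_pos_le_add (fun ε hε => ?_)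
      obtain ⟨h, h1, h2, h3, h4⟩ := key g hg hgU ε hε
      refine le_trans (csInf_le ⟨0, ?_⟩ ⟨h, h1, h2, h3, rfl⟩) h4
      rintro _ ⟨_, _, _, _, rfl⟩
      exact Metric.hausdorffDist_nonneg
    · refine csInf_le_csInf ⟨0, ?_⟩ ⟨_, h₀, k1, k2, k3, rfl⟩ ?_
      · rintro _ ⟨_, _, _, rfl⟩
        exact Metric.hausdorffDist_nonneg
      · rintro _ ⟨h, h1, h2, h3, rfl⟩
        exact ⟨h, h1, h3, rfl⟩
  · congr 1
    ext e
    constructor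
    · rintro ⟨h, h1, _, h3, _⟩
      exact absurd ⟨h, h1, h3⟩ hne
    · rintro ⟨h, h1, h3, _⟩
      exact absurd ⟨h, h1, h3⟩ hne
end
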